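/- Let E and F be pseudo-normed real vector spaces, a ∈ ℝ, q ∈ [1,∞], and let (X^σ,‖·‖_{X^σ})_{σ≥a} and (Y^σ,‖·‖_{Y^σ})_{σ≥a} be scales of pseudo-normed vector spaces of type (q,E) and (q,F) respectively, with associated maps (L_X,R_X) and (L_Y,R_Y). Let a ≤ s_0 < s < s_1 and r > 0, and let Φ : B_s(0,r) → Y^{s_0} (where B_s(0,r) = {v ∈ X^s : ‖v‖_{X^s} < r}) satisfy: (contraction) there is C₀ > 0 with ‖Φ(v)−Φ(w)‖_{Y^{s_0}_∞} ≤ C₀‖v−w‖_{X^{s_0}_1} for all v,w ∈ B_s(0,r); (tame) there is C₁ > 0 with ‖Φ(v)‖_{Y^{s_1}_∞} ≤ C₁‖v‖_{X^{s_1}_1} for all v ∈ X^∞_1 ∩ B_s(0,r). Then Φ(v) ∈ Y^s for all v ∈ B_s(0,r), and the mapping Φ : B_s(0,r) → Y^s is continuous (with respect to the distances induced by ‖·‖_{X^s} and ‖·‖_{Y^s}). -/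

import Mathlib

open Filter
open scoped ENNReal NNReal

/-- A pseudo-norm on a real vector space: nonnegative, symmetric, subadditive,
and vanishing exactly at `0`. -/
structure IsPseudoNorm {E : Type*} [AddCommGroup E] [Module ℝ E] (N : E → ℝ) : Prop where
  nonneg : ∀ x, 0 ≤ N x
  neg : ∀ x, N (-x) = N x
  add_le : ∀ x y, N (x + y) ≤ N x + N y
  eq_zero_iff : ∀ x, N x = 0 ↔ x = 0

/-- The `Σ^s_q(E)` pseudo-norm of a sequence `f : ℕ → E`:
`(∑_k 2^{qks} ‖f_k‖_E^q)^{1/q}` for `q < ∞` and `sup_k 2^{ks} ‖f_k‖_E` for `q = ∞`. -/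
noncomputable def sigmaNorm {E : Type*} (N : E → ℝ) (s : ℝ) (q : ℝ≥0∞) (f : ℕ → E) : ℝ≥0∞ :=
  if q = ⊤ then ⨆ k : ℕ, ENNReal.ofReal ((2 : ℝ) ^ ((k : ℝ) * s) * N (f k))
  else (∑' k : ℕ, ENNReal.ofReal ((2 : ℝ) ^ ((k : ℝ) * s) * N (f k)) ^ q.toReal) ^ (1 / q.toReal)

/-- Membership in `Σ^s_q(E)`: finiteness of the norm when `q < ∞`, and
`2^{ks}‖f_k‖_E → 0` when `q = ∞`. -/
def memSigma {E : Type*} (N : E → ℝ) (s : ℝ) (q : ℝ≥0∞) (f : ℕ → E) : Prop :=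
  if q = ⊤ then Tendsto (fun k : ℕ => (2 : ℝ) ^ ((k : ℝ) * s) * N (f k)) atTop (nhds 0)
  else sigmaNorm N s q f < ⊤

/-- Friedrichs smoothing operator `S_n`: truncation of a sequence after index `n`. -/
def smoothS {E : Type*} [Zero E] (n : ℕ) (f : ℕ → E) : ℕ → E :=
  fun k => if k ≤ n then f k else 0

/-- A scale of pseudo-normed vector spaces `(X^σ)_{σ ≥ a}` of type `(q, E)` (Definition 2.7).
The ambient type `X` plays the role of `X^a`; `mem σ` is the submodule `X^σ ⊆ X^a`, and
`nrm σ` is the pseudo-norm `‖·‖_{X^σ}` (given as a total function whose pseudo-norm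
properties are required on `X^σ`). `L` and `R` are the linear maps comparing the scale
with the sequence spaces `Σ^σ_q(E)`. -/
structure PseudoScale {E : Type*} [AddCommGroup E] [Module ℝ E]
    (X : Type*) [AddCommGroup X] [Module ℝ X]
    (a : ℝ) (q : ℝ≥0∞) (NE : E → ℝ) where
  mem : ℝ → Submodule ℝ X
  nrm : ℝ → X → ℝ
  L : X →ₗ[ℝ] (ℕ → E)
  R : (ℕ → E) →ₗ[ℝ] X
  /-- The whole space is `X^a`. -/
  mem_a : ∀ u : X, u ∈ mem a
  /-- `‖·‖_{X^σ}` is a pseudo-norm on `X^σ`. -/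
  nrm_nonneg : ∀ σ, a ≤ σ → ∀ u ∈ mem σ, 0 ≤ nrm σ u
  nrm_neg : ∀ σ, a ≤ σ → ∀ u ∈ mem σ, nrm σ (-u) = nrm σ u
  nrm_add_le : ∀ σ, a ≤ σ → ∀ u ∈ mem σ, ∀ v ∈ mem σ, nrm σ (u + v) ≤ nrm σ u + nrm σ v
  nrm_eq_zero : ∀ σ, a ≤ σ → ∀ u ∈ mem σ, (nrm σ u = 0 ↔ u = 0)
  /-- The family is decreasing: `σ' ≥ σ ≥ a` implies `X^{σ'} ⊆ X^σ` with
  `‖·‖_{X^σ} ≤ ‖·‖_{X^{σ'}}`. -/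
  mem_anti : ∀ σ σ', a ≤ σ → σ ≤ σ' → mem σ' ≤ mem σ
  nrm_mono : ∀ σ σ', a ≤ σ → σ ≤ σ' → ∀ u ∈ mem σ', nrm σ u ≤ nrm σ' u
  /-- `R ∘ L = Id` on `X^a`. -/
  R_L : ∀ u : X, R (L u) = u
  /-- `L(R f) ∈ Σ^σ_1(E)` with `‖L(Rf)‖_{Σ^σ_1} ≤ C(σ) ‖f‖_{Σ^σ_1}` for `f ∈ Σ^σ_1(E)`. -/
  L_R_bound : ∀ σ, a ≤ σ → ∃ C : ℝ, 0 < C ∧ ∀ f : ℕ → E, memSigma NE σ 1 f →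
    memSigma NE σ 1 (L (R f)) ∧
    sigmaNorm NE σ 1 (L (R f)) ≤ ENNReal.ofReal C * sigmaNorm NE σ 1 f
  /-- `L(X^σ) ⊆ Σ^σ_q(E)`. -/
  L_mem : ∀ σ, a ≤ σ → ∀ u ∈ mem σ, memSigma NE σ q (L u)
  /-- `R(Σ^σ_q(E)) ⊆ X^σ`. -/
  R_mem : ∀ σ, a ≤ σ → ∀ f : ℕ → E, memSigma NE σ q f → R f ∈ mem σ
  /-- `‖Lu‖_{Σ^σ_q} ≤ C(σ) ‖u‖_{X^σ}` on `X^σ`. -/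
  L_bound : ∀ σ, a ≤ σ → ∃ C : ℝ, 0 < C ∧ ∀ u ∈ mem σ,
    sigmaNorm NE σ q (L u) ≤ ENNReal.ofReal (C * nrm σ u)
  /-- `‖Rf‖_{X^σ} ≤ C(σ) ‖f‖_{Σ^σ_q}` on `Σ^σ_q(E)`. -/
  R_bound : ∀ σ, a ≤ σ → ∃ C : ℝ, 0 < C ∧ ∀ f : ℕ → E, memSigma NE σ q f →
    nrm σ (R f) ≤ C * (sigmaNorm NE σ q f).toReal

/-!
The tame estimate bounds the frequency-`n` part of `Φ(S_n v)` and the contraction estimate bounds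
that of `Φ(v) - Φ(S_n v)`. Rescaled to the exponent `s`, the first sees only the frequencies of `v`
up to `n`, damped by `2^{-(n-j)(s₁-s)}`, and the second only those beyond `n`, damped by
`2^{-(j-n)(s-s₀)}`. Hence the weighted sequence of `Φ(v)` is dominated by the convolution of that
of `v` with the summable kernel `2^{-β|m|}`, `β = min (s-s₀) (s₁-s)`. Young's inequality then makes
the `ℓ^q` tails of `Φ(w)` small uniformly for `w` near `v`, so that continuity into `Y^s` follows
from convergence of each single frequency, which the contraction estimate provides.
-/

open MeasureTheory Topology

section Lp

variable {α ι : Type*} [MeasurableSpace α] {μ : Measure α} [Countable ι]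

lemma lintegral_tsum_rpow {f : ι → α → ℝ≥0∞} (hf : ∀ i, AEMeasurable (f i) μ) {r : ℝ}
    (hr : 0 < r) :
    ∫⁻ x, (∑' i, f i x) ^ r ∂μ = ⨆ t : Finset ι, ∫⁻ x, (∑ i ∈ t, f i x) ^ r ∂μ := by
  have hmono {t u : Finset ι} (htu : t ⊆ u) (x : α) :
      (∑ i ∈ t, f i x) ^ r ≤ (∑ i ∈ u, f i x) ^ r :=
    ENNReal.rpow_le_rpow (Finset.sum_le_sum_of_subset htu) hr.le
  classical
  rw [← lintegral_iSup_directed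
    (fun t => (Finset.aemeasurable_fun_sum t fun i _ => hf i).pow_const r)
    fun t u => ⟨t ∪ u, hmono Finset.subset_union_left, hmono Finset.subset_union_right⟩]
  refine lintegral_congr fun x => ?_
  rw [ENNReal.tsum_eq_iSup_sum]
  exact (ENNReal.orderIsoRpow r hr).map_iSup _

lemma eLpNorm_tsum_le {f : ι → α → ℝ≥0∞} (hf : ∀ i, AEMeasurable (f i) μ) {p : ℝ≥0∞}
    (hp : 1 ≤ p) :
    eLpNorm (fun x => ∑' i, f i x) p μ ≤ ∑' i, eLpNorm (f i) p μ := by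
  rcases eq_or_ne p ⊤ with rfl | hp_top
  · simp only [eLpNorm_exponent_top]
    refine eLpNormEssSup_le_of_ae_enorm_bound ?_
    filter_upwards [ae_all_iff.2 fun i => enorm_ae_le_eLpNormEssSup (f i) μ] with x hx
    exact ENNReal.tsum_le_tsum hx
  have hp_zero : p ≠ 0 := (one_pos.trans_le hp).ne'
  have hr : 0 < p.toReal := ENNReal.toReal_pos hp_zero hp_top
  rw [eLpNorm_eq_lintegral_rpow_enorm_toReal hp_zero hp_top, one_div, ENNReal.rpow_inv_le_iff hr]
  simp only [enorm_eq_self]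
  rw [lintegral_tsum_rpow hf hr]
  refine iSup_le fun t => ?_
  rw [← ENNReal.rpow_inv_le_iff hr, ← one_div]
  calc (∫⁻ x, (∑ i ∈ t, f i x) ^ p.toReal ∂μ) ^ (1 / p.toReal)
      = eLpNorm (∑ i ∈ t, f i) p μ := by
        simp [eLpNorm_eq_lintegral_rpow_enorm_toReal hp_zero hp_top]
    _ ≤ ∑ i ∈ t, eLpNorm (f i) p μ :=
        eLpNorm_sum_le (fun i _ => (hf i).aestronglyMeasurable) hp
    _ ≤ ∑' i, eLpNorm (f i) p μ := ENNReal.sum_le_tsum t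

lemma eLpNorm_comp_count_restrict_le {β : Type*} [DiscreteMeasurableSpace α]
    [MeasurableSpace β] [DiscreteMeasurableSpace β] {g : α → β} {s : Set α} {t : Set β}
    (hg : Set.InjOn g s) (hst : Set.MapsTo g s t) (q : ℝ≥0∞) {c : β → ℝ≥0∞}
    (hc : StronglyMeasurable c) :
    eLpNorm (c ∘ g) q (Measure.count.restrict s) ≤ eLpNorm c q (Measure.count.restrict t) := by
  rw [← eLpNorm_map_measure hc.aestronglyMeasurable Measurable.of_discrete.aemeasurable]
  refine eLpNorm_mono_measure c (Measure.le_iff.2 fun A _ => ?_)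
  rw [Measure.map_apply .of_discrete .of_discrete, Measure.restrict_apply .of_discrete,
    Measure.restrict_apply .of_discrete, Measure.count_apply .of_discrete,
    Measure.count_apply .of_discrete]
  gcongr
  rw [← (hg.mono Set.inter_subset_right).encard_image]
  exact Set.encard_le_encard (Set.image_subset_iff.2 fun x hx => ⟨hx.1, hst hx.2⟩)

end Lp

section Tail

variable {q : ℝ≥0∞}

/-- The `ℓ^q` norm of `(c k)_{k ≥ n}`, encoded as an `L^q` seminorm for the counting measure. -/
noncomputable def tailNorm (q : ℝ≥0∞) (n : ℕ) (c : ℕ → ℝ≥0∞) : ℝ≥0∞ :=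
  eLpNorm c q (Measure.count.restrict (Set.Ici n))

lemma tailNorm_zero (c : ℕ → ℝ≥0∞) : tailNorm q 0 c = eLpNorm c q .count := by
  rw [tailNorm, Set.eq_univ_of_forall (s := Set.Ici 0) Nat.zero_le, Measure.restrict_univ]

lemma tailNorm_le_eLpNorm_count (q : ℝ≥0∞) (n : ℕ) (c : ℕ → ℝ≥0∞) :
    tailNorm q n c ≤ eLpNorm c q .count :=
  eLpNorm_restrict_le c q .count _

lemma tailNorm_mono {n : ℕ} {c d : ℕ → ℝ≥0∞} (h : ∀ k ≥ n, c k ≤ d k) :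
    tailNorm q n c ≤ tailNorm q n d := by
  refine eLpNorm_mono_enorm_ae ?_
  filter_upwards [ae_restrict_mem measurableSet_Ici] with k hk using h k hk

lemma tailNorm_add_le (hq : 1 ≤ q) (n : ℕ) (c d : ℕ → ℝ≥0∞) :
    tailNorm q n (c + d) ≤ tailNorm q n c + tailNorm q n d :=
  eLpNorm_add_le .of_discrete .of_discrete hq

lemma tailNorm_const_mul_le (q : ℝ≥0∞) (n : ℕ) (K : ℝ≥0∞) (c : ℕ → ℝ≥0∞) :
    tailNorm q n (fun k => K * c k) ≤ K * tailNorm q n c :=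
  eLpNorm_le_mul_eLpNorm_of_ae_le_mul'' q .of_discrete (.of_forall fun _ => le_rfl)

lemma eLpNorm_count_indicator_Ici (c : ℕ → ℝ≥0∞) (n : ℕ) :
    eLpNorm ((Set.Ici n).indicator c) q .count = tailNorm q n c :=
  eLpNorm_indicator_eq_eLpNorm_restrict measurableSet_Ici

lemma tailNorm_le_add_tailNorm_succ (hq : 1 ≤ q) (n : ℕ) (c : ℕ → ℝ≥0∞) :
    tailNorm q n c ≤ c n + tailNorm q (n + 1) c := by
  have hc : (Set.Ici n).indicator c =
      ({n} : Set ℕ).indicator c + (Set.Ici (n + 1)).indicator c := by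
    refine Eq.trans ?_ (Set.indicator_union_of_disjoint (by simp) c)
    congr 1
    ext k
    simp only [Set.mem_Ici, Set.mem_union, Set.mem_singleton_iff]
    omega
  have hsingle : eLpNorm (({n} : Set ℕ).indicator c) q .count = c n := by
    rw [eLpNorm_indicator_eq_eLpNorm_restrict (.singleton n), Measure.restrict_singleton]
    simp [eLpNorm_dirac c n (one_pos.trans_le hq).ne']
  rw [← eLpNorm_count_indicator_Ici, hc, ← hsingle, ← eLpNorm_count_indicator_Ici]
  exact eLpNorm_add_le .of_discrete .of_discrete hq

lemma eLpNorm_count_le_sum_add_tailNorm (hq : 1 ≤ q) (n : ℕ) (c : ℕ → ℝ≥0∞) :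
    eLpNorm c q .count ≤ ∑ k ∈ Finset.range n, c k + tailNorm q n c := by
  induction n with
  | zero => simp [tailNorm_zero]
  | succ n ih =>
    rw [Finset.sum_range_succ, add_assoc]
    exact ih.trans (by gcongr; exact tailNorm_le_add_tailNorm_succ hq n c)

lemma tendsto_eLpNorm_count_zero (hq : 1 ≤ q) {ι : Type*} {l : Filter ι} {c : ι → ℕ → ℝ≥0∞}
    (hcoord : ∀ k, Tendsto (fun i => c i k) l (𝓝 0))
    (htail : Tendsto (fun p : ι × ℕ => tailNorm q p.2 (c p.1)) (l ×ˢ atTop) (𝓝 0)) :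
    Tendsto (fun i => eLpNorm (c i) q .count) l (𝓝 0) := by
  rw [ENNReal.tendsto_nhds_zero] at htail ⊢
  intro ε hε
  obtain ⟨P, hP, Q, hQ, hPQ⟩ := eventually_prod_iff.1 (htail (ε / 2) (ENNReal.half_pos hε.ne'))
  obtain ⟨n, hn⟩ := hQ.exists
  have hhead : Tendsto (fun i => ∑ k ∈ Finset.range n, c i k) l (𝓝 0) := by
    simpa using tendsto_finsetSum (Finset.range n) fun k _ => hcoord k
  filter_upwards [hP, ENNReal.tendsto_nhds_zero.1 hhead (ε / 2) (ENNReal.half_pos hε.ne')]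
    with i hi hi'
  calc eLpNorm (c i) q .count ≤ ∑ k ∈ Finset.range n, c i k + tailNorm q n (c i) :=
        eLpNorm_count_le_sum_add_tailNorm hq n (c i)
    _ ≤ ε / 2 + ε / 2 := add_le_add hi' (hPQ hi hn)
    _ = ε := ENNReal.add_halves ε

/-- The condition that the `ℓ^q` tails of `c` tend to `0`. For sequences with finite terms this is
`c ∈ ℓ^q` when `q < ∞` and `c ∈ c₀` when `q = ∞`, which treats both cases of `memSigma` at once. -/
def VanishingTail (q : ℝ≥0∞) (c : ℕ → ℝ≥0∞) : Prop :=
  Tendsto (fun n => tailNorm q n c) atTop (𝓝 0)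

lemma VanishingTail.mono {c d : ℕ → ℝ≥0∞} (hd : VanishingTail q d) (h : c ≤ d) :
    VanishingTail q c :=
  tendsto_nhds_bot_mono' hd fun _ => tailNorm_mono fun k _ => h k

lemma VanishingTail.add (hq : 1 ≤ q) {c d : ℕ → ℝ≥0∞} (hc : VanishingTail q c)
    (hd : VanishingTail q d) : VanishingTail q (c + d) := by
  have hsum : Tendsto (fun n => tailNorm q n c + tailNorm q n d) atTop (𝓝 0) := by
    simpa using Tendsto.add hc hd
  exact tendsto_nhds_bot_mono' hsum fun n => tailNorm_add_le hq n c d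

lemma VanishingTail.eLpNorm_ne_top (hq : 1 ≤ q) {c : ℕ → ℝ≥0∞} (hc : VanishingTail q c)
    (hfin : ∀ k, c k ≠ ⊤) : eLpNorm c q .count ≠ ⊤ := by
  obtain ⟨n, hn⟩ := (Tendsto.eventually_lt_const ENNReal.zero_lt_top hc).exists
  exact ne_top_of_le_ne_top (ENNReal.add_ne_top.2 ⟨ENNReal.sum_ne_top.2 fun k _ => hfin k, hn.ne⟩)
    (eLpNorm_count_le_sum_add_tailNorm hq n c)

lemma vanishingTail_top_iff {c : ℕ → ℝ≥0∞} : VanishingTail ⊤ c ↔ Tendsto c atTop (𝓝 0) := by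
  refine ⟨fun h => ?_, fun h => ENNReal.tendsto_nhds_zero.2 fun ε hε => ?_⟩
  · refine tendsto_nhds_bot_mono' h fun n => ?_
    calc c n = (Set.Ici n).indicator c n := by simp
      _ ≤ tailNorm ⊤ n c := by
        rw [← eLpNorm_count_indicator_Ici]
        exact enorm_le_eLpNorm_count _ n ENNReal.top_ne_zero
  · filter_upwards [eventually_forall_ge_atTop.2 (ENNReal.tendsto_nhds_zero.1 h ε hε)] with n hn
    rw [tailNorm, eLpNorm_exponent_top]
    refine eLpNormEssSup_le_of_ae_enorm_bound ?_
    filter_upwards [ae_restrict_mem measurableSet_Ici] with k hk using hn k hk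

lemma vanishingTail_of_eLpNorm_ne_top (hq₀ : q ≠ 0) (hq : q ≠ ⊤) {c : ℕ → ℝ≥0∞}
    (hc : eLpNorm c q .count ≠ ⊤) : VanishingTail q c := by
  have hr : 0 < q.toReal := ENNReal.toReal_pos hq₀ hq
  have hint : ∫⁻ k, c k ^ q.toReal ∂.count ≠ ⊤ := by
    simpa using (lintegral_rpow_enorm_lt_top_of_eLpNorm_lt_top hq₀ hq hc.lt_top).ne
  have htail : Tendsto (fun n : ℕ => ∫⁻ k in Set.Ici n, c k ^ q.toReal ∂.count) atTop (𝓝 0) := by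
    simp only [← lintegral_indicator measurableSet_Ici]
    rw [← lintegral_zero (μ := (Measure.count : Measure ℕ))]
    refine tendsto_lintegral_of_dominated_convergence _ (fun _ => .of_discrete)
      (fun n => .of_forall (Set.indicator_le_self _ _)) hint (.of_forall fun k => ?_)
    refine tendsto_const_nhds.congr' ?_
    filter_upwards [eventually_gt_atTop k] with n hn
    simp [hn]
  have hroot := (ENNReal.continuous_rpow_const (y := 1 / q.toReal)).tendsto 0 |>.comp htail
  rw [ENNReal.zero_rpow_of_pos (by positivity)] at hroot
  refine hroot.congr fun n => ?_
  simp [tailNorm, eLpNorm_eq_lintegral_rpow_enorm_toReal hq₀ hq]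

/-- The convolution `κ * c` of a kernel on `ℤ` with a sequence extended by `0` to negative indices,
restricted to `ℕ`. -/
noncomputable def discreteConv (κ : ℤ → ℝ≥0∞) (c : ℕ → ℝ≥0∞) (k : ℕ) : ℝ≥0∞ :=
  ∑' j : ℕ, κ (k - j) * c j

lemma discreteConv_mono (κ : ℤ → ℝ≥0∞) {c d : ℕ → ℝ≥0∞} (h : c ≤ d) :
    discreteConv κ c ≤ discreteConv κ d :=
  fun _ => ENNReal.tsum_le_tsum fun j => mul_le_mul_right (h j) _

lemma discreteConv_add (κ : ℤ → ℝ≥0∞) (c d : ℕ → ℝ≥0∞) :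
    discreteConv κ (c + d) = discreteConv κ c + discreteConv κ d := by
  funext k
  simp only [discreteConv, Pi.add_apply, mul_add, ENNReal.tsum_add]

/-- The translate of `c` by `m`, where `c` is extended by `0` to negative indices. It expresses
`κ * c` as a superposition of translates of `c`. -/
def shiftSeq (m : ℤ) (c : ℕ → ℝ≥0∞) (k : ℕ) : ℝ≥0∞ :=
  if m ≤ k then c (k - m).toNat else 0

lemma discreteConv_eq_tsum_shiftSeq (κ : ℤ → ℝ≥0∞) (c : ℕ → ℝ≥0∞) (k : ℕ) :
    discreteConv κ c k = ∑' m : ℤ, κ m * shiftSeq m c k := by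
  have hinj : Function.Injective fun j : ℕ => (k : ℤ) - j := fun i j h => by simpa using h
  have hsupp : Function.support (fun m : ℤ => κ m * shiftSeq m c k) ⊆
      Set.range fun j : ℕ => (k : ℤ) - j := by
    intro m hm
    have hmk : m ≤ k := by
      by_contra h
      simp [shiftSeq, h] at hm
    exact ⟨(k - m).toNat, by dsimp only; omega⟩
  rw [← hinj.tsum_eq hsupp]
  simp [discreteConv, shiftSeq]

lemma tailNorm_shiftSeq_le (q : ℝ≥0∞) (n : ℕ) (m : ℤ) (c : ℕ → ℝ≥0∞) :
    tailNorm q n (shiftSeq m c) ≤ tailNorm q (n - m).toNat c := by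
  have hshift : shiftSeq m c = {k : ℕ | m ≤ k}.indicator (c ∘ fun k : ℕ => (k - m).toNat) := by
    ext k
    simp [shiftSeq, Set.indicator_apply]
  rw [hshift, tailNorm, eLpNorm_indicator_eq_eLpNorm_restrict .of_discrete,
    Measure.restrict_restrict .of_discrete]
  refine eLpNorm_comp_count_restrict_le (fun i hi j hj hij => ?_) (fun k hk => ?_) q .of_discrete
  · simp only [Set.mem_inter_iff, Set.mem_ofPred_eq] at hi hj
    omega
  · simp only [Set.mem_inter_iff, Set.mem_ofPred_eq, Set.mem_Ici] at hk ⊢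
    omega

lemma tailNorm_discreteConv_le (hq : 1 ≤ q) (κ : ℤ → ℝ≥0∞) (c : ℕ → ℝ≥0∞) (n : ℕ) :
    tailNorm q n (discreteConv κ c) ≤ ∑' m : ℤ, κ m * tailNorm q (n - m).toNat c := by
  calc tailNorm q n (discreteConv κ c)
      = tailNorm q n (fun k => ∑' m : ℤ, κ m * shiftSeq m c k) := by
        rw [funext (discreteConv_eq_tsum_shiftSeq κ c)]
    _ ≤ ∑' m : ℤ, tailNorm q n (fun k => κ m * shiftSeq m c k) :=
        eLpNorm_tsum_le (fun _ => .of_discrete) hq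
    _ ≤ ∑' m : ℤ, κ m * tailNorm q (n - m).toNat c := by
        gcongr with m
        exact (tailNorm_const_mul_le q n (κ m) _).trans
          (by gcongr; exact tailNorm_shiftSeq_le q n m c)

lemma eLpNorm_discreteConv_le (hq : 1 ≤ q) (κ : ℤ → ℝ≥0∞) (c : ℕ → ℝ≥0∞) :
    eLpNorm (discreteConv κ c) q .count ≤ (∑' m, κ m) * eLpNorm c q .count := by
  rw [← tailNorm_zero, ← ENNReal.tsum_mul_right]
  refine (tailNorm_discreteConv_le hq κ c 0).trans ?_
  gcongr
  exact tailNorm_le_eLpNorm_count q _ c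

lemma VanishingTail.discreteConv (hq : 1 ≤ q) {κ : ℤ → ℝ≥0∞} (hκ : ∑' m, κ m ≠ ⊤)
    {c : ℕ → ℝ≥0∞} (hc : VanishingTail q c) (hfin : ∀ k, c k ≠ ⊤) :
    VanishingTail q (discreteConv κ c) := by
  have hterm (m : ℤ) : Tendsto (fun n : ℕ => κ m * tailNorm q (n - m).toNat c) atTop (𝓝 0) := by
    have hshift : Tendsto (fun n : ℕ => ((n : ℤ) - m).toNat) atTop atTop :=
      tendsto_atTop.2 fun b => (eventually_ge_atTop (b + m.toNat)).mono fun n hn => by omega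
    simpa using ENNReal.Tendsto.const_mul (hc.comp hshift)
      (Or.inr (ENNReal.ne_top_of_tsum_ne_top hκ m))
  have hdom : Tendsto (fun n : ℕ => ∑' m : ℤ, κ m * tailNorm q (n - m).toNat c) atTop (𝓝 0) := by
    simp only [← lintegral_count]
    rw [← lintegral_zero (μ := (Measure.count : Measure ℤ))]
    refine tendsto_lintegral_of_dominated_convergence (fun m => κ m * eLpNorm c q .count)
      (fun _ => .of_discrete)
      (fun n => .of_forall fun m => mul_le_mul_right (tailNorm_le_eLpNorm_count q _ c) _) ?_
      (.of_forall hterm)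
    rw [lintegral_count, ENNReal.tsum_mul_right]
    exact ENNReal.mul_ne_top hκ (hc.eLpNorm_ne_top hq hfin)
  exact tendsto_nhds_bot_mono' hdom (tailNorm_discreteConv_le hq κ c)

end Tail

/-- The two-sided geometric kernel `2^{-β|m|}` on `ℤ`. -/
noncomputable def dyadicKernel (β : ℝ) (m : ℤ) : ℝ≥0∞ :=
  ENNReal.ofReal (2 ^ (-β * |(m : ℝ)|))

lemma tsum_dyadicKernel_ne_top {β : ℝ} (hβ : 0 < β) : ∑' m, dyadicKernel β m ≠ ⊤ := by
  have hgeom : Summable fun n : ℕ => (2 : ℝ) ^ (-β * n) := by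
    simp only [Real.rpow_mul two_pos.le, Real.rpow_natCast]
    exact summable_geometric_of_lt_one (by positivity)
      (Real.rpow_lt_one_of_one_lt_of_neg one_lt_two (neg_lt_zero.2 hβ))
  refine Summable.tsum_ofReal_ne_top (Summable.of_nat_of_neg ?_ ?_) <;> simpa using hgeom

section WeightedSeq

/-- The sequence `2^{ks} ‖f_k‖`, whose `ℓ^q` norm is the `Σ^s_q` norm of `f`. -/
noncomputable def weightedSeq {E : Type*} (N : E → ℝ) (s : ℝ) (f : ℕ → E) (k : ℕ) : ℝ≥0∞ :=
  ENNReal.ofReal ((2 : ℝ) ^ ((k : ℝ) * s) * N (f k))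

variable {E : Type*} {N : E → ℝ} {q : ℝ≥0∞}

lemma weightedSeq_ne_top (N : E → ℝ) (s : ℝ) (f : ℕ → E) (k : ℕ) :
    weightedSeq N s f k ≠ ⊤ :=
  ENNReal.ofReal_ne_top

lemma sigmaNorm_eq_eLpNorm (hq : q ≠ 0) (N : E → ℝ) (s : ℝ) (f : ℕ → E) :
    sigmaNorm N s q f = eLpNorm (weightedSeq N s f) q .count := by
  rw [sigmaNorm]
  split_ifs with hq_top
  · simp [hq_top, weightedSeq]
  · simp [eLpNorm_eq_lintegral_rpow_enorm_toReal hq hq_top, lintegral_count, weightedSeq]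

lemma sigmaNorm_one (N : E → ℝ) (s : ℝ) (f : ℕ → E) :
    sigmaNorm N s 1 f = ∑' k, weightedSeq N s f k := by
  simp [sigmaNorm, weightedSeq]

lemma memSigma_one_iff {s : ℝ} {f : ℕ → E} : memSigma N s 1 f ↔ sigmaNorm N s 1 f < ⊤ := by
  simp [memSigma]

lemma weightedSeq_le_sigmaNorm (hq : q ≠ 0) (N : E → ℝ) (s : ℝ) (f : ℕ → E) (k : ℕ) :
    weightedSeq N s f k ≤ sigmaNorm N s q f := by
  rw [sigmaNorm_eq_eLpNorm hq]
  exact enorm_le_eLpNorm_count _ k hq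

lemma rpow_mul_weightedSeq (N : E → ℝ) (s τ : ℝ) (f : ℕ → E) (k : ℕ) :
    ENNReal.ofReal (2 ^ ((k : ℝ) * (s - τ))) * weightedSeq N τ f k = weightedSeq N s f k := by
  rw [weightedSeq, weightedSeq, ← ENNReal.ofReal_mul (by positivity), ← mul_assoc,
    ← Real.rpow_add two_pos]
  ring_nf

lemma weightedSeq_le_rpow_mul_sigmaNorm (hq : q ≠ 0) (N : E → ℝ) (s τ : ℝ) (f : ℕ → E) (k : ℕ) :
    weightedSeq N s f k ≤ ENNReal.ofReal (2 ^ ((k : ℝ) * (s - τ))) * sigmaNorm N τ q f := by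
  rw [← rpow_mul_weightedSeq N s τ]
  gcongr
  exact weightedSeq_le_sigmaNorm hq N τ f k

lemma rpow_mul_weightedSeq_le {s τ β : ℝ} (f : ℕ → E) {k j : ℕ}
    (h : β * |(k : ℝ) - j| ≤ ((k : ℝ) - j) * (τ - s)) :
    ENNReal.ofReal (2 ^ ((k : ℝ) * (s - τ))) * weightedSeq N τ f j
      ≤ dyadicKernel β (k - j) * weightedSeq N s f j := by
  rw [← rpow_mul_weightedSeq N τ s f j, ← mul_assoc, ← ENNReal.ofReal_mul (by positivity),
    ← Real.rpow_add two_pos, dyadicKernel]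
  gcongr
  · exact one_le_two
  · push_cast
    linarith

lemma sigmaNorm_one_le_discreteConv_zero {s s₀ β : ℝ} (hβ : β ≤ s - s₀) (f : ℕ → E) :
    sigmaNorm N s₀ 1 f ≤ discreteConv (dyadicKernel β) (weightedSeq N s f) 0 := by
  rw [sigmaNorm_one]
  refine ENNReal.tsum_le_tsum fun j => ?_
  have hj : (0 : ℝ) ≤ j := j.cast_nonneg
  have h : β * |((0 : ℕ) : ℝ) - j| ≤ (((0 : ℕ) : ℝ) - j) * (s₀ - s) := by
    rw [Nat.cast_zero, zero_sub, abs_neg, abs_of_nonneg hj]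
    nlinarith
  simpa using rpow_mul_weightedSeq_le (N := N) f h

lemma sigmaNorm_one_le_mul_sigmaNorm (hq : 1 ≤ q) {s s₀ β : ℝ} (hβ : β ≤ s - s₀) (f : ℕ → E) :
    sigmaNorm N s₀ 1 f ≤ (∑' m, dyadicKernel β m) * sigmaNorm N s q f := by
  have hq₀ : q ≠ 0 := (one_pos.trans_le hq).ne'
  rw [sigmaNorm_eq_eLpNorm hq₀]
  exact (sigmaNorm_one_le_discreteConv_zero hβ f).trans
    ((enorm_le_eLpNorm_count _ 0 hq₀).trans (eLpNorm_discreteConv_le hq _ _))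

variable [AddCommGroup E] [Module ℝ E]

lemma weightedSeq_add_le (hN : IsPseudoNorm N) (s : ℝ) (f g : ℕ → E) :
    weightedSeq N s (f + g) ≤ weightedSeq N s f + weightedSeq N s g := by
  intro k
  have hf := hN.nonneg (f k)
  have hg := hN.nonneg (g k)
  rw [Pi.add_apply, weightedSeq, weightedSeq, weightedSeq,
    ← ENNReal.ofReal_add (by positivity) (by positivity), ← mul_add]
  gcongr
  exact hN.add_le _ _

lemma weightedSeq_neg (hN : IsPseudoNorm N) (s : ℝ) (f : ℕ → E) :
    weightedSeq N s (-f) = weightedSeq N s f := by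
  funext k
  simp [weightedSeq, hN.neg]

lemma weightedSeq_sub_le (hN : IsPseudoNorm N) (s : ℝ) (f g : ℕ → E) :
    weightedSeq N s (f - g) ≤ weightedSeq N s f + weightedSeq N s g := by
  rw [sub_eq_add_neg, ← weightedSeq_neg hN s g]
  exact weightedSeq_add_le hN s f (-g)

lemma weightedSeq_smoothS (hN : IsPseudoNorm N) (s : ℝ) (n : ℕ) (f : ℕ → E) :
    weightedSeq N s (smoothS n f) = (Set.Iic n).indicator (weightedSeq N s f) := by
  funext k
  by_cases hk : k ≤ n <;> simp [weightedSeq, smoothS, hk, (hN.eq_zero_iff 0).2 rfl]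

lemma weightedSeq_sub_smoothS (hN : IsPseudoNorm N) (s : ℝ) (n : ℕ) (f : ℕ → E) :
    weightedSeq N s (f - smoothS n f) = (Set.Ici (n + 1)).indicator (weightedSeq N s f) := by
  funext k
  by_cases hk : k ≤ n
  · simp [weightedSeq, smoothS, hk, (hN.eq_zero_iff 0).2 rfl]
  · simp [weightedSeq, smoothS, hk, not_le.1 hk]

lemma tendsto_weightedSeq_iff (hN : IsPseudoNorm N) {s : ℝ} {f : ℕ → E} :
    Tendsto (weightedSeq N s f) atTop (𝓝 0) ↔
      Tendsto (fun k : ℕ => (2 : ℝ) ^ ((k : ℝ) * s) * N (f k)) atTop (𝓝 0) := by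
  have hnn (k : ℕ) : 0 ≤ (2 : ℝ) ^ ((k : ℝ) * s) * N (f k) :=
    mul_nonneg (by positivity) (hN.nonneg _)
  rw [← ENNReal.tendsto_toReal_iff (weightedSeq_ne_top N s f) ENNReal.zero_ne_top]
  simp [weightedSeq, ENNReal.toReal_ofReal, hnn]

lemma memSigma_iff_vanishingTail (hN : IsPseudoNorm N) (hq : 1 ≤ q) {s : ℝ} {f : ℕ → E} :
    memSigma N s q f ↔ VanishingTail q (weightedSeq N s f) := by
  have hq₀ : q ≠ 0 := (one_pos.trans_le hq).ne'
  rw [memSigma]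
  split_ifs with hq_top
  · rw [hq_top, vanishingTail_top_iff, tendsto_weightedSeq_iff hN]
  · rw [sigmaNorm_eq_eLpNorm hq₀, lt_top_iff_ne_top]
    exact ⟨vanishingTail_of_eLpNorm_ne_top hq₀ hq_top,
      fun h => h.eLpNorm_ne_top hq (weightedSeq_ne_top N s f)⟩

lemma memSigma_sub (hN : IsPseudoNorm N) (hq : 1 ≤ q) {s : ℝ} {f g : ℕ → E}
    (hf : memSigma N s q f) (hg : memSigma N s q g) : memSigma N s q (f - g) := by
  rw [memSigma_iff_vanishingTail hN hq] at hf hg ⊢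
  exact (hf.add hq hg).mono (weightedSeq_sub_le hN s f g)

lemma memSigma_smoothS (hN : IsPseudoNorm N) (hq : 1 ≤ q) (s : ℝ) (n : ℕ) (f : ℕ → E) :
    memSigma N s q (smoothS n f) := by
  rw [memSigma_iff_vanishingTail hN hq, weightedSeq_smoothS hN]
  refine tendsto_const_nhds.congr' ?_
  filter_upwards [eventually_gt_atTop n] with m hm
  refine le_antisymm zero_le ((tailNorm_mono fun k hk => ?_).trans_eq
    (eLpNorm_zero (ε := ℝ≥0∞)))
  simp [hm.trans_le hk]

lemma rpow_mul_sigmaNorm_sub_smoothS_le (hN : IsPseudoNorm N) {s s₀ β : ℝ} (hβ : β ≤ s - s₀)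
    (f : ℕ → E) (k : ℕ) :
    ENNReal.ofReal (2 ^ ((k : ℝ) * (s - s₀))) * sigmaNorm N s₀ 1 (f - smoothS k f)
      ≤ discreteConv (dyadicKernel β) (weightedSeq N s f) k := by
  rw [sigmaNorm_one, weightedSeq_sub_smoothS hN, ← ENNReal.tsum_mul_left]
  refine ENNReal.tsum_le_tsum fun j => ?_
  by_cases hj : k + 1 ≤ j
  · rw [Set.indicator_of_mem (Set.mem_Ici.2 hj)]
    apply rpow_mul_weightedSeq_le
    have hkj : (k : ℝ) ≤ j := by exact_mod_cast (Nat.le_succ k).trans hj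
    rw [abs_of_nonpos (by linarith)]
    nlinarith
  · simp [hj]

lemma rpow_mul_sigmaNorm_smoothS_le (hN : IsPseudoNorm N) {s s₁ β : ℝ} (hβ : β ≤ s₁ - s)
    (f : ℕ → E) (k : ℕ) :
    ENNReal.ofReal (2 ^ ((k : ℝ) * (s - s₁))) * sigmaNorm N s₁ 1 (smoothS k f)
      ≤ discreteConv (dyadicKernel β) (weightedSeq N s f) k := by
  rw [sigmaNorm_one, weightedSeq_smoothS hN, ← ENNReal.tsum_mul_left]
  refine ENNReal.tsum_le_tsum fun j => ?_
  by_cases hj : j ≤ k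
  · rw [Set.indicator_of_mem (Set.mem_Iic.2 hj)]
    apply rpow_mul_weightedSeq_le
    have hkj : (j : ℝ) ≤ k := by exact_mod_cast hj
    rw [abs_of_nonneg (by linarith)]
    nlinarith
  · simp [hj]

end WeightedSeq

namespace PseudoScale

variable {E X : Type*} [AddCommGroup E] [Module ℝ E] [AddCommGroup X] [Module ℝ X] {a : ℝ}
  {q : ℝ≥0∞} {N : E → ℝ} {s : ℝ}

/-- The neighbourhood filter of `v` for the distance `‖w - v‖_{X^s}` on `v + X^s`. The second
factor discards the points where `S.nrm s (w - v)` is a junk value. -/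
def nhdsIn (S : PseudoScale X a q N) (s : ℝ) (v : X) : Filter X :=
  comap (fun w => S.nrm s (w - v)) (𝓝 0) ⊓ 𝓟 {w | w - v ∈ S.mem s}

variable (S : PseudoScale X a q N) {v : X}

lemma nhdsIn_hasBasis (hs : a ≤ s) (v : X) :
    (S.nhdsIn s v).HasBasis (0 < ·) fun δ => {w | w - v ∈ S.mem s ∧ S.nrm s (w - v) < δ} := by
  refine ((Metric.nhds_basis_ball.comap _).inf_principal _).congr (fun _ => Iff.rfl)
    fun δ _ => Set.ext fun w => ?_
  simp only [Set.mem_inter_iff, Set.mem_preimage, mem_ball_zero_iff, Real.norm_eq_abs,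
    Set.mem_ofPred_eq]
  rw [and_comm]
  exact and_congr_right fun hw => by rw [abs_of_nonneg (S.nrm_nonneg s hs _ hw)]

lemma mem_mem_nhdsIn (hv : v ∈ S.mem s) : {w | w ∈ S.mem s} ∈ S.nhdsIn s v := by
  refine mem_inf_of_right (mem_principal.2 fun w hw => ?_)
  simpa using (S.mem s).add_mem hw hv

lemma pure_le_nhdsIn (hs : a ≤ s) (v : X) : pure v ≤ S.nhdsIn s v := by
  refine (S.nhdsIn_hasBasis hs v).ge_iff.2 fun δ hδ => ?_
  have hzero : S.nrm s 0 = 0 := (S.nrm_eq_zero s hs 0 (zero_mem _)).2 rfl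
  simpa [hzero] using hδ

lemma ball_mem_nhdsIn (hs : a ≤ s) {r : ℝ} (hv : v ∈ S.mem s) (hvr : S.nrm s v < r) :
    {w | w ∈ S.mem s ∧ S.nrm s w < r} ∈ S.nhdsIn s v := by
  refine (S.nhdsIn_hasBasis hs v).mem_iff.2 ⟨r - S.nrm s v, sub_pos.2 hvr, fun w hw => ?_⟩
  have hadd := S.nrm_add_le s hs _ hw.1 v hv
  rw [sub_add_cancel] at hadd
  exact ⟨by simpa using (S.mem s).add_mem hw.1 hv, by linarith [hw.2]⟩

lemma tendsto_nrm_sub (s : ℝ) (v : X) :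
    Tendsto (fun w => S.nrm s (w - v)) (S.nhdsIn s v) (𝓝 0) :=
  tendsto_comap.mono_left inf_le_left

lemma tendsto_sigmaNorm_L_sub (hs : a ≤ s) (v : X) :
    Tendsto (fun w => sigmaNorm N s q (S.L (w - v))) (S.nhdsIn s v) (𝓝 0) := by
  obtain ⟨C, -, hC⟩ := S.L_bound s hs
  have hnrm : Tendsto (fun w => ENNReal.ofReal (C * S.nrm s (w - v))) (S.nhdsIn s v) (𝓝 0) := by
    simpa using ENNReal.tendsto_ofReal ((S.tendsto_nrm_sub s v).const_mul C)
  refine tendsto_nhds_bot_mono hnrm ?_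
  filter_upwards [mem_inf_of_right (mem_principal_self _)] with w hw using hC _ hw

lemma tendsto_R_nhdsIn (hs : a ≤ s) {ι : Type*} {l : Filter ι} {f : ι → ℕ → E}
    (hmem : ∀ᶠ i in l, memSigma N s q (f i - S.L v))
    (hlim : Tendsto (fun i => sigmaNorm N s q (f i - S.L v)) l (𝓝 0)) :
    Tendsto (fun i => S.R (f i)) l (S.nhdsIn s v) := by
  obtain ⟨C, -, hC⟩ := S.R_bound s hs
  have hR (i : ι) : S.R (f i) - v = S.R (f i - S.L v) := by rw [map_sub, S.R_L]
  have hbound : Tendsto (fun i => C * (sigmaNorm N s q (f i - S.L v)).toReal) l (𝓝 0) := by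
    simpa using ((ENNReal.tendsto_toReal ENNReal.zero_ne_top).comp hlim).const_mul C
  refine tendsto_inf.2 ⟨tendsto_comap_iff.2 ?_, tendsto_principal.2 ?_⟩
  · refine squeeze_zero' ?_ ?_ hbound
    · filter_upwards [hmem] with i hi
      simpa only [Function.comp_apply, hR] using S.nrm_nonneg s hs _ (S.R_mem s hs _ hi)
    · filter_upwards [hmem] with i hi
      simpa only [Function.comp_apply, hR] using hC _ hi
  · filter_upwards [hmem] with i hi
    simpa only [Set.mem_ofPred_eq, hR] using S.R_mem s hs _ hi

lemma vanishingTail_L (hN : IsPseudoNorm N) (hq : 1 ≤ q) (hs : a ≤ s) {u : X}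
    (hu : u ∈ S.mem s) : VanishingTail q (weightedSeq N s (S.L u)) :=
  (memSigma_iff_vanishingTail hN hq).1 (S.L_mem s hs u hu)

lemma tendsto_tailNorm_discreteConv (hN : IsPseudoNorm N) (hq : 1 ≤ q) (hs : a ≤ s)
    (hv : v ∈ S.mem s) {κ : ℤ → ℝ≥0∞} (hκ : ∑' m, κ m ≠ ⊤) :
    Tendsto (fun p : X × ℕ => tailNorm q p.2 (discreteConv κ (weightedSeq N s (S.L p.1))))
      (S.nhdsIn s v ×ˢ atTop) (𝓝 0) := by
  have hlim : Tendsto (fun p : X × ℕ => (∑' m, κ m) * sigmaNorm N s q (S.L (p.1 - v)) +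
      tailNorm q p.2 (discreteConv κ (weightedSeq N s (S.L v))))
      (S.nhdsIn s v ×ˢ atTop) (𝓝 0) := by
    simpa using (ENNReal.Tendsto.const_mul ((S.tendsto_sigmaNorm_L_sub hs v).comp tendsto_fst)
      (Or.inr hκ)).add (((S.vanishingTail_L hN hq hs hv).discreteConv hq hκ
        (weightedSeq_ne_top _ _ _)).comp tendsto_snd)
  refine tendsto_nhds_bot_mono' hlim fun p => ?_
  have hle : weightedSeq N s (S.L p.1) ≤
      weightedSeq N s (S.L (p.1 - v)) + weightedSeq N s (S.L v) := by
    simpa using weightedSeq_add_le hN s (S.L (p.1 - v)) (S.L v)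
  calc tailNorm q p.2 (discreteConv κ (weightedSeq N s (S.L p.1)))
      ≤ tailNorm q p.2 (discreteConv κ (weightedSeq N s (S.L (p.1 - v))) +
          discreteConv κ (weightedSeq N s (S.L v))) := by
        rw [← discreteConv_add]
        exact tailNorm_mono fun k _ => discreteConv_mono κ hle k
    _ ≤ tailNorm q p.2 (discreteConv κ (weightedSeq N s (S.L (p.1 - v)))) +
          tailNorm q p.2 (discreteConv κ (weightedSeq N s (S.L v))) := tailNorm_add_le hq _ _ _
    _ ≤ _ := by
        gcongr
        rw [sigmaNorm_eq_eLpNorm (one_pos.trans_le hq).ne']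
        exact (tailNorm_le_eLpNorm_count q _ _).trans (eLpNorm_discreteConv_le hq _ _)

/-- The Friedrichs smoothing operator of the scale, `S_n` transported from sequences to `X`. -/
def trunc (n : ℕ) (u : X) : X :=
  S.R (smoothS n (S.L u))

lemma tendsto_trunc (hN : IsPseudoNorm N) (hq : 1 ≤ q) (hs : a ≤ s) (hv : v ∈ S.mem s) :
    Tendsto (fun p : X × ℕ => S.trunc p.2 p.1) (S.nhdsIn s v ×ˢ atTop) (S.nhdsIn s v) := by
  have hq₀ : q ≠ 0 := (one_pos.trans_le hq).ne'
  have hsplit (w : X) (n : ℕ) : smoothS n (S.L w) - S.L v =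
      smoothS n (S.L (w - v)) - (S.L v - smoothS n (S.L v)) := by
    funext k
    by_cases hk : k ≤ n <;> simp [smoothS, hk]
  have hle (w : X) (n : ℕ) : weightedSeq N s (smoothS n (S.L w) - S.L v) ≤
      weightedSeq N s (S.L (w - v)) + (Set.Ici (n + 1)).indicator (weightedSeq N s (S.L v)) := by
    rw [hsplit, ← weightedSeq_sub_smoothS hN]
    refine (weightedSeq_sub_le hN s _ _).trans (add_le_add_left ?_ _)
    rw [weightedSeq_smoothS hN]
    exact Set.indicator_le_self _ _
  refine S.tendsto_R_nhdsIn hs (.of_forall fun p => ?_) ?_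
  · exact memSigma_sub hN hq (memSigma_smoothS hN hq s _ _) (S.L_mem s hs v hv)
  · have hlim : Tendsto (fun p : X × ℕ => sigmaNorm N s q (S.L (p.1 - v)) +
        tailNorm q (p.2 + 1) (weightedSeq N s (S.L v))) (S.nhdsIn s v ×ˢ atTop) (𝓝 0) := by
      simpa using ((S.tendsto_sigmaNorm_L_sub hs v).comp tendsto_fst).add
        (((S.vanishingTail_L hN hq hs hv).comp (tendsto_add_atTop_nat 1)).comp tendsto_snd)
    refine tendsto_nhds_bot_mono' hlim fun p => ?_
    rw [sigmaNorm_eq_eLpNorm hq₀, sigmaNorm_eq_eLpNorm hq₀, ← eLpNorm_count_indicator_Ici]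
    exact (eLpNorm_mono_enorm (hle p.1 p.2)).trans
      (eLpNorm_add_le .of_discrete .of_discrete hq)

lemma exists_rpow_mul_sigmaNorm_sub_trunc_le (hN : IsPseudoNorm N) (hq : 1 ≤ q) {s₀ β : ℝ}
    (hs₀ : a ≤ s₀) (hβ₀ : 0 < β) (hβ : β ≤ s - s₀) :
    ∃ D : ℝ≥0, ∀ w ∈ S.mem s, ∀ n : ℕ,
      ENNReal.ofReal (2 ^ ((n : ℝ) * (s - s₀))) * sigmaNorm N s₀ 1 (S.L w - S.L (S.trunc n w)) ≤
        D * discreteConv (dyadicKernel β) (weightedSeq N s (S.L w)) n := by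
  obtain ⟨D, -, hD⟩ := S.L_R_bound s₀ hs₀
  refine ⟨D.toNNReal, fun w hw n => ?_⟩
  have hw_fin : sigmaNorm N s q (S.L w) ≠ ⊤ := by
    rw [sigmaNorm_eq_eLpNorm (one_pos.trans_le hq).ne']
    exact (S.vanishingTail_L hN hq (by linarith) hw).eLpNorm_ne_top hq (weightedSeq_ne_top _ _ _)
  have hw_mem : memSigma N s₀ 1 (S.L w) := memSigma_one_iff.2 <|
    (sigmaNorm_one_le_mul_sigmaNorm hq hβ _).trans_lt
      (ENNReal.mul_lt_top (tsum_dyadicKernel_ne_top hβ₀).lt_top hw_fin.lt_top)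
  have htrunc : S.L w - S.L (S.trunc n w) = S.L (S.R (S.L w - smoothS n (S.L w))) := by
    rw [trunc, map_sub, map_sub, S.R_L]
  calc _ ≤ ENNReal.ofReal (2 ^ ((n : ℝ) * (s - s₀))) *
        (ENNReal.ofReal D * sigmaNorm N s₀ 1 (S.L w - smoothS n (S.L w))) := by
        rw [htrunc]
        gcongr
        exact (hD _ (memSigma_sub hN le_rfl hw_mem (memSigma_smoothS hN le_rfl s₀ n _))).2
    _ ≤ _ := by
        rw [mul_left_comm]
        exact mul_le_mul_right (rpow_mul_sigmaNorm_sub_smoothS_le hN hβ _ n) _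

lemma exists_rpow_mul_sigmaNorm_trunc_le (hN : IsPseudoNorm N) {s₁ β : ℝ} (hs₁ : a ≤ s₁)
    (hβ : β ≤ s₁ - s) :
    ∃ D : ℝ≥0, ∀ (w : X) (n : ℕ),
      ENNReal.ofReal (2 ^ ((n : ℝ) * (s - s₁))) * sigmaNorm N s₁ 1 (S.L (S.trunc n w)) ≤
        D * discreteConv (dyadicKernel β) (weightedSeq N s (S.L w)) n := by
  obtain ⟨D, -, hD⟩ := S.L_R_bound s₁ hs₁
  refine ⟨D.toNNReal, fun w n => ?_⟩
  calc _ ≤ ENNReal.ofReal (2 ^ ((n : ℝ) * (s - s₁))) *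
        (ENNReal.ofReal D * sigmaNorm N s₁ 1 (smoothS n (S.L w))) := by
        gcongr
        exact (hD _ (memSigma_smoothS hN le_rfl s₁ n _)).2
    _ ≤ _ := by
        rw [mul_left_comm]
        exact mul_le_mul_right (rpow_mul_sigmaNorm_smoothS_le hN hβ _ n) _

/-- Membership in `X^∞_1`. -/
def IsSmooth (u : X) : Prop :=
  ∃ g : ℕ → E, (∀ σ : ℝ, memSigma N σ 1 g) ∧ u = S.R g

lemma isSmooth_trunc (hN : IsPseudoNorm N) (n : ℕ) (u : X) : S.IsSmooth (S.trunc n u) :=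
  ⟨_, fun σ => memSigma_smoothS hN le_rfl σ n _, rfl⟩

end PseudoScale

section Interpolation

variable {E F X Y : Type*} [AddCommGroup E] [Module ℝ E] [AddCommGroup F] [Module ℝ F]
  [AddCommGroup X] [Module ℝ X] [AddCommGroup Y] [Module ℝ Y] {NE : E → ℝ} {NF : F → ℝ} {a : ℝ}
  {q : ℝ≥0∞}

/-- The contraction and tame estimates for `Φ` on `U`, with the constants `C₀` and `C₁`. -/
structure IsLipschitzTameOn (SX : PseudoScale X a q NE) (SY : PseudoScale Y a q NF) (s₀ s₁ : ℝ)
    (C₀ C₁ : ℝ≥0) (Φ : X → Y) (U : Set X) : Prop where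
  lipschitz : ∀ v ∈ U, ∀ w ∈ U, sigmaNorm NF s₀ ⊤ (SY.L (Φ v) - SY.L (Φ w)) ≤
    C₀ * sigmaNorm NE s₀ 1 (SX.L v - SX.L w)
  tame : ∀ v ∈ U, SX.IsSmooth v →
    sigmaNorm NF s₁ ⊤ (SY.L (Φ v)) ≤ C₁ * sigmaNorm NE s₁ 1 (SX.L v)

namespace IsLipschitzTameOn

variable {SX : PseudoScale X a q NE} {SY : PseudoScale Y a q NF} {s₀ s s₁ : ℝ} {C₀ C₁ : ℝ≥0}
  {Φ : X → Y} {U : Set X} {v : X}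

lemma exists_weightedSeq_le (hΦ : IsLipschitzTameOn SX SY s₀ s₁ C₀ C₁ Φ U)
    (hNE : IsPseudoNorm NE) (hNF : IsPseudoNorm NF) (hq : 1 ≤ q) (ha₀ : a ≤ s₀) (ha₁ : a ≤ s₁)
    {β : ℝ} (hβ : 0 < β) (hβ₀ : β ≤ s - s₀) (hβ₁ : β ≤ s₁ - s) :
    ∃ K : ℝ≥0, ∀ w ∈ U, w ∈ SX.mem s → ∀ n : ℕ, SX.trunc n w ∈ U →
      weightedSeq NF s (SY.L (Φ w)) n ≤
        K * discreteConv (dyadicKernel β) (weightedSeq NE s (SX.L w)) n := by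
  obtain ⟨D₀, hD₀⟩ := SX.exists_rpow_mul_sigmaNorm_sub_trunc_le hNE hq ha₀ hβ hβ₀
  obtain ⟨D₁, hD₁⟩ := SX.exists_rpow_mul_sigmaNorm_trunc_le hNE ha₁ hβ₁
  refine ⟨C₀ * D₀ + C₁ * D₁, fun w hwU hw n hn => ?_⟩
  set g := SY.L (Φ w)
  set h := SY.L (Φ (SX.trunc n w))
  set c := discreteConv (dyadicKernel β) (weightedSeq NE s (SX.L w)) n
  have hhigh : weightedSeq NF s (g - h) n ≤ C₀ * (D₀ * c) := by
    refine (weightedSeq_le_rpow_mul_sigmaNorm ENNReal.top_ne_zero NF s s₀ _ n).trans ?_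
    refine (mul_le_mul_right (hΦ.lipschitz w hwU _ hn) _).trans ?_
    rw [mul_left_comm]
    exact mul_le_mul_right (hD₀ w hw n) _
  have hlow : weightedSeq NF s h n ≤ C₁ * (D₁ * c) := by
    refine (weightedSeq_le_rpow_mul_sigmaNorm ENNReal.top_ne_zero NF s s₁ _ n).trans ?_
    refine (mul_le_mul_right (hΦ.tame _ hn (SX.isSmooth_trunc hNE n w)) _).trans ?_
    rw [mul_left_comm]
    exact mul_le_mul_right (hD₁ w n) _
  calc weightedSeq NF s g n = weightedSeq NF s (g - h + h) n := by rw [sub_add_cancel]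
    _ ≤ weightedSeq NF s (g - h) n + weightedSeq NF s h n := weightedSeq_add_le hNF s _ _ n
    _ ≤ C₀ * (D₀ * c) + C₁ * (D₁ * c) := add_le_add hhigh hlow
    _ = ↑(C₀ * D₀ + C₁ * D₁) * c := by push_cast; ring

lemma exists_discreteConv_bound (hΦ : IsLipschitzTameOn SX SY s₀ s₁ C₀ C₁ Φ U)
    (hNE : IsPseudoNorm NE) (hNF : IsPseudoNorm NF) (hq : 1 ≤ q) (ha : a ≤ s₀) (hs₀ : s₀ < s)
    (hs₁ : s < s₁) (hv : v ∈ SX.mem s) (hU : U ∈ SX.nhdsIn s v) :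
    ∃ β > 0, ∃ K : ℝ≥0, ∀ᶠ p : X × ℕ in SX.nhdsIn s v ×ˢ atTop, ∀ k ≥ p.2,
      weightedSeq NF s (SY.L (Φ p.1)) k ≤
        K * discreteConv (dyadicKernel β) (weightedSeq NE s (SX.L p.1)) k := by
  have hβ : 0 < min (s - s₀) (s₁ - s) := lt_min (sub_pos.2 hs₀) (sub_pos.2 hs₁)
  obtain ⟨K, hK⟩ := hΦ.exists_weightedSeq_le hNE hNF hq ha (by linarith) hβ (min_le_left _ _)
    (min_le_right _ _)
  refine ⟨_, hβ, K, ?_⟩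
  have htrunc := (SX.tendsto_trunc hNE hq (ha.trans hs₀.le) hv).eventually hU
  obtain ⟨P, hP, Q, hQ, hPQ⟩ := eventually_prod_iff.1 htrunc
  filter_upwards [tendsto_fst (inter_mem hU (SX.mem_mem_nhdsIn hv)), tendsto_fst.eventually hP,
    tendsto_snd.eventually (eventually_forall_ge_atTop.2 hQ)] with p hp hp₁ hp₂ k hk
  exact hK p.1 hp.1 hp.2 k (hPQ hp₁ (hp₂ k hk))

lemma tendsto_tailNorm (hΦ : IsLipschitzTameOn SX SY s₀ s₁ C₀ C₁ Φ U)
    (hNE : IsPseudoNorm NE) (hNF : IsPseudoNorm NF) (hq : 1 ≤ q) (ha : a ≤ s₀) (hs₀ : s₀ < s)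
    (hs₁ : s < s₁) (hv : v ∈ SX.mem s) (hU : U ∈ SX.nhdsIn s v) :
    Tendsto (fun p : X × ℕ => tailNorm q p.2 (weightedSeq NF s (SY.L (Φ p.1))))
      (SX.nhdsIn s v ×ˢ atTop) (𝓝 0) := by
  obtain ⟨β, hβ, K, hK⟩ := hΦ.exists_discreteConv_bound hNE hNF hq ha hs₀ hs₁ hv hU
  have hconv := ENNReal.Tendsto.const_mul (SX.tendsto_tailNorm_discreteConv hNE hq
    (ha.trans hs₀.le) hv (tsum_dyadicKernel_ne_top hβ)) (Or.inr (ENNReal.coe_ne_top (r := K)))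
  rw [mul_zero] at hconv
  refine tendsto_nhds_bot_mono hconv ?_
  filter_upwards [hK] with p hp
  exact (tailNorm_mono hp).trans (tailNorm_const_mul_le q _ _ _)

lemma eventually_vanishingTail (hΦ : IsLipschitzTameOn SX SY s₀ s₁ C₀ C₁ Φ U)
    (hNE : IsPseudoNorm NE) (hNF : IsPseudoNorm NF) (hq : 1 ≤ q) (ha : a ≤ s₀) (hs₀ : s₀ < s)
    (hs₁ : s < s₁) (hv : v ∈ SX.mem s) (hU : U ∈ SX.nhdsIn s v) :
    ∀ᶠ w in SX.nhdsIn s v, VanishingTail q (weightedSeq NF s (SY.L (Φ w))) := by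
  obtain ⟨β, hβ, K, hK⟩ := hΦ.exists_discreteConv_bound hNE hNF hq ha hs₀ hs₁ hv hU
  filter_upwards [hK.curry, SX.mem_mem_nhdsIn hv] with w hwK hw
  have hconv : VanishingTail q (discreteConv (dyadicKernel β) (weightedSeq NE s (SX.L w))) :=
    (SX.vanishingTail_L hNE hq (ha.trans hs₀.le) hw).discreteConv hq (tsum_dyadicKernel_ne_top hβ)
      (weightedSeq_ne_top _ _ _)
  have hKconv := ENNReal.Tendsto.const_mul hconv (Or.inr (ENNReal.coe_ne_top (r := K)))
  rw [mul_zero] at hKconv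
  refine tendsto_nhds_bot_mono hKconv ?_
  filter_upwards [hwK] with n hn
  exact (tailNorm_mono hn).trans (tailNorm_const_mul_le q _ _ _)

lemma tendsto_weightedSeq_sub (hΦ : IsLipschitzTameOn SX SY s₀ s₁ C₀ C₁ Φ U)
    (hq : 1 ≤ q) (hs : a ≤ s) (hs₀ : s₀ < s) (hU : U ∈ SX.nhdsIn s v) (k : ℕ) :
    Tendsto (fun w => weightedSeq NF s (SY.L (Φ w) - SY.L (Φ v)) k) (SX.nhdsIn s v) (𝓝 0) := by
  set Z := ∑' m, dyadicKernel (s - s₀) m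
  set B : ℝ≥0∞ := ENNReal.ofReal (2 ^ ((k : ℝ) * (s - s₀))) * (C₀ * Z)
  have hB : B ≠ ⊤ := ENNReal.mul_ne_top ENNReal.ofReal_ne_top
    (ENNReal.mul_ne_top ENNReal.coe_ne_top (tsum_dyadicKernel_ne_top (sub_pos.2 hs₀)))
  have hlim : Tendsto (fun w => B * sigmaNorm NE s q (SX.L (w - v))) (SX.nhdsIn s v) (𝓝 0) := by
    simpa using ENNReal.Tendsto.const_mul (SX.tendsto_sigmaNorm_L_sub hs v) (Or.inr hB)
  refine tendsto_nhds_bot_mono hlim ?_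
  filter_upwards [hU] with w hw
  refine (weightedSeq_le_rpow_mul_sigmaNorm ENNReal.top_ne_zero NF s s₀ _ k).trans ?_
  rw [mul_assoc, mul_assoc]
  gcongr
  refine (hΦ.lipschitz w hw v (SX.pure_le_nhdsIn hs v hU)).trans ?_
  gcongr
  rw [← map_sub]
  exact sigmaNorm_one_le_mul_sigmaNorm hq le_rfl _

lemma tendsto_sigmaNorm_sub (hΦ : IsLipschitzTameOn SX SY s₀ s₁ C₀ C₁ Φ U)
    (hNE : IsPseudoNorm NE) (hNF : IsPseudoNorm NF) (hq : 1 ≤ q) (ha : a ≤ s₀) (hs₀ : s₀ < s)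
    (hs₁ : s < s₁) (hv : v ∈ SX.mem s) (hU : U ∈ SX.nhdsIn s v) :
    Tendsto (fun w => sigmaNorm NF s q (SY.L (Φ w) - SY.L (Φ v))) (SX.nhdsIn s v) (𝓝 0) := by
  have hs := ha.trans hs₀.le
  have hΦv : VanishingTail q (weightedSeq NF s (SY.L (Φ v))) :=
    SX.pure_le_nhdsIn hs v (hΦ.eventually_vanishingTail hNE hNF hq ha hs₀ hs₁ hv hU)
  have hlim := (hΦ.tendsto_tailNorm hNE hNF hq ha hs₀ hs₁ hv hU).add (hΦv.comp tendsto_snd)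
  rw [add_zero] at hlim
  simp only [sigmaNorm_eq_eLpNorm (one_pos.trans_le hq).ne']
  refine tendsto_eLpNorm_count_zero hq (hΦ.tendsto_weightedSeq_sub hq hs hs₀ hU)
    (tendsto_nhds_bot_mono' hlim fun p => ?_)
  exact (tailNorm_mono fun k _ => weightedSeq_sub_le hNF s _ _ k).trans
    (tailNorm_add_le hq _ _ _)

end IsLipschitzTameOn

theorem nonlinear_interpolation_scales_general (hNE : IsPseudoNorm NE) (hNF : IsPseudoNorm NF)
    (hq : 1 ≤ q) {SX : PseudoScale X a q NE} {SY : PseudoScale Y a q NF} {s₀ s s₁ : ℝ}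
    (ha : a ≤ s₀) (hs₀ : s₀ < s) (hs₁ : s < s₁) {C₀ C₁ : ℝ≥0} {Φ : X → Y} {U : Set X}
    (hΦ : IsLipschitzTameOn SX SY s₀ s₁ C₀ C₁ Φ U) {v : X} (hv : v ∈ SX.mem s)
    (hU : U ∈ SX.nhdsIn s v) :
    Φ v ∈ SY.mem s ∧ Tendsto Φ (SX.nhdsIn s v) (SY.nhdsIn s (Φ v)) := by
  have hs := ha.trans hs₀.le
  have hmem : ∀ᶠ w in SX.nhdsIn s v, memSigma NF s q (SY.L (Φ w)) := by
    simpa only [memSigma_iff_vanishingTail hNF hq] using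
      hΦ.eventually_vanishingTail hNE hNF hq ha hs₀ hs₁ hv hU
  have hmem_v : memSigma NF s q (SY.L (Φ v)) := SX.pure_le_nhdsIn hs v hmem
  refine ⟨by simpa only [SY.R_L] using SY.R_mem s hs _ hmem_v, ?_⟩
  simpa only [SY.R_L] using SY.tendsto_R_nhdsIn hs
    (hmem.mono fun w hw => memSigma_sub hNF hq hw hmem_v)
    (hΦ.tendsto_sigmaNorm_sub hNE hNF hq ha hs₀ hs₁ hv hU)

end Interpolation

/-- Theorem 2.10 (main nonlinear interpolation theorem): let `(X^σ)` and `(Y^σ)` be scales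
of pseudo-normed vector spaces of type `(q,E)` and `(q,F)`, let `a ≤ s₀ < s < s₁`, `r > 0`,
and let `Φ : B_s(0,r) ⊆ X^s → Y^{s₀}` satisfy the contraction estimate
`‖Φ(v)-Φ(w)‖_{Y^{s₀}_∞} ≤ C₀ ‖v-w‖_{X^{s₀}_1}` on the ball and the tame estimate
`‖Φ(v)‖_{Y^{s₁}_∞} ≤ C₁ ‖v‖_{X^{s₁}_1}` for `v ∈ X^∞_1 ∩ B_s(0,r)`. Then `Φ(v) ∈ Y^s`
for every `v ∈ B_s(0,r)`, and `Φ : B_s(0,r) → Y^s` is continuous. -/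
theorem nonlinear_interpolation_scales
    {E F : Type*} [AddCommGroup E] [Module ℝ E] [AddCommGroup F] [Module ℝ F]
    {X Y : Type*} [AddCommGroup X] [Module ℝ X] [AddCommGroup Y] [Module ℝ Y]
    (NE : E → ℝ) (NF : F → ℝ) (hNE : IsPseudoNorm NE) (hNF : IsPseudoNorm NF)
    (a : ℝ) (q : ℝ≥0∞) (hq : 1 ≤ q)
    (SX : PseudoScale X a q NE) (SY : PseudoScale Y a q NF)
    (s₀ s s₁ r : ℝ) (ha : a ≤ s₀) (hs₀ : s₀ < s) (hs₁ : s < s₁) (hr : 0 < r)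
    (Φ : X → Y)
    -- Φ maps the ball B_s(0,r) ⊆ X^s into Y^{s₀}
    (hΦmem : ∀ v, v ∈ SX.mem s → SX.nrm s v < r → Φ v ∈ SY.mem s₀)
    -- contraction: ‖Φ(v) - Φ(w)‖_{Y^{s₀}_∞} ≤ C₀ ‖v - w‖_{X^{s₀}_1}
    (C₀ : ℝ) (hC₀ : 0 < C₀)
    (hlip : ∀ v w, v ∈ SX.mem s → SX.nrm s v < r → w ∈ SX.mem s → SX.nrm s w < r →
      sigmaNorm NF s₀ ⊤ (SY.L (Φ v) - SY.L (Φ w))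
        ≤ ENNReal.ofReal C₀ * sigmaNorm NE s₀ 1 (SX.L v - SX.L w))
    -- tame: ‖Φ(v)‖_{Y^{s₁}_∞} ≤ C₁ ‖v‖_{X^{s₁}_1} for v ∈ X^∞_1 ∩ B_s(0,r)
    (C₁ : ℝ) (hC₁ : 0 < C₁)
    (htame : ∀ v, (∃ g : ℕ → E, (∀ σ : ℝ, memSigma NE σ 1 g) ∧ v = SX.R g) →
      v ∈ SX.mem s → SX.nrm s v < r →
      sigmaNorm NF s₁ ⊤ (SY.L (Φ v)) ≤ ENNReal.ofReal C₁ * sigmaNorm NE s₁ 1 (SX.L v)) :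
    -- interpolation: Φ(v) ∈ Y^s for all v ∈ B_s(0,r)
    (∀ v, v ∈ SX.mem s → SX.nrm s v < r → Φ v ∈ SY.mem s) ∧
    -- continuity of Φ : B_s(0,r) → Y^s for the induced distances
    (∀ v, v ∈ SX.mem s → SX.nrm s v < r →
      ∀ ε : ℝ, 0 < ε → ∃ δ : ℝ, 0 < δ ∧
        ∀ w, w ∈ SX.mem s → SX.nrm s w < r → SX.nrm s (w - v) < δ →
          SY.nrm s (Φ w - Φ v) < ε) := by
  have hΦ : IsLipschitzTameOn SX SY s₀ s₁ C₀.toNNReal C₁.toNNReal Φ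
      {w | w ∈ SX.mem s ∧ SX.nrm s w < r} :=
    ⟨fun v hv w hw => hlip v w hv.1 hv.2 hw.1 hw.2, fun v hv hsmooth => htame v hsmooth hv.1 hv.2⟩
  have hs := ha.trans hs₀.le
  have hlocal (v : X) (hv : v ∈ SX.mem s) (hvr : SX.nrm s v < r) :=
    nonlinear_interpolation_scales_general hNE hNF hq ha hs₀ hs₁ hΦ hv
      (SX.ball_mem_nhdsIn hs hv hvr)
  refine ⟨fun v hv hvr => (hlocal v hv hvr).1, fun v hv hvr ε hε => ?_⟩
  obtain ⟨δ, hδ, h⟩ := ((SX.nhdsIn_hasBasis hs v).tendsto_iff (SY.nhdsIn_hasBasis hs (Φ v))).1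
    (hlocal v hv hvr).2 ε hε
  exact ⟨δ, hδ, fun w hw _ hwv => (h w ⟨(SX.mem s).sub_mem hw hv, hwv⟩).2⟩
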